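/- For every complex number q with |q| < 1, ∑_{k∈ℤ} q^{30k²}(q^k − q^{11k+1}) + ∑_{k∈ℤ} q^{30k²}(q^{−19k+3} − q^{31k+8}) = G(q). (Equation (2.15): the sum of the shifted Virasoro characters φ(q)q^{1/30}(χ^{1,1}_{5,6}(q) + χ^{1,5}_{5,6}(q)) equals G(q).) -/

import Mathlib

open scoped BigOperators

/-- The Euler function `φ(q) = ∏_{n=1}^∞ (1 - q^n)`. -/
noncomputable def eulerPhi (q : ℂ) : ℂ := ∏' n : ℕ, (1 - q ^ (n + 1))

/-- The first Rogers–Ramanujan series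
`a(q) = ∏_{n=1}^∞ 1/((1 - q^{5n-2})(1 - q^{5n-3}))`. -/
noncomputable def rrA (q : ℂ) : ℂ :=
  ∏' n : ℕ, ((1 - q ^ (5 * n + 3)) * (1 - q ^ (5 * n + 2)))⁻¹

/-- The second Rogers–Ramanujan series
`b(q) = ∏_{n=1}^∞ 1/((1 - q^{5n-1})(1 - q^{5n-4}))`. -/
noncomputable def rrB (q : ℂ) : ℂ :=
  ∏' n : ℕ, ((1 - q ^ (5 * n + 4)) * (1 - q ^ (5 * n + 1)))⁻¹

/-- `G(q) = ∏_{n=1}^∞ (1-q^{15n})(1-q^{15n-7})(1-q^{15n-8})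
          - q ∏_{n=1}^∞ (1-q^{15n})(1-q^{15n-13})(1-q^{15n-2})`. -/
noncomputable def Gf (q : ℂ) : ℂ :=
  (∏' n : ℕ, (1 - q ^ (15 * n + 15)) * (1 - q ^ (15 * n + 8)) * (1 - q ^ (15 * n + 7)))
  - q * ∏' n : ℕ, (1 - q ^ (15 * n + 15)) * (1 - q ^ (15 * n + 2)) * (1 - q ^ (15 * n + 13))

/-- `H(q) = ∏_{n=1}^∞ (1-q^{15n})(1-q^{15n-4})(1-q^{15n-11})
          + q ∏_{n=1}^∞ (1-q^{15n})(1-q^{15n-14})(1-q^{15n-1})`. -/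
noncomputable def Hf (q : ℂ) : ℂ :=
  (∏' n : ℕ, (1 - q ^ (15 * n + 15)) * (1 - q ^ (15 * n + 11)) * (1 - q ^ (15 * n + 4)))
  + q * ∏' n : ℕ, (1 - q ^ (15 * n + 15)) * (1 - q ^ (15 * n + 1)) * (1 - q ^ (15 * n + 14))

/-!
Ramanujan's form of the Jacobi triple product reads
`f(a, b) = ∑ a^{k(k+1)/2} b^{k(k-1)/2} = (ab; ab)_∞ (-a; ab)_∞ (-b; ab)_∞`. It is the limit, by
dominated convergence, of MacMahon's finite identity, which expands `(-a; ab)_n (-b; ab)_n` in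
Gaussian binomial coefficients and follows by induction on `n` from a Pascal-type rule. Thus
`G(q) = f(-q^8, -q^7) - q f(-q^13, -q^2)`, and splitting both series by the parity of `k` produces
the four progressions of exponents on the left-hand side.
-/

open Filter Topology

section Field

variable {K : Type*} [Field K]

/-- The finite `q`-Pochhammer symbol `(a; q)_n = ∏_{i<n} (1 - a q^i)`. -/
def qPochhammer (a q : K) (n : ℕ) : K := ∏ i ∈ Finset.range n, (1 - a * q ^ i)

/-- The reciprocal `1 / (q; q)_k`, indexed by the integers. The value `0` for `k < 0` makes the
recurrence `qPochhammerInv_eq_mul_add_one` valid for every integer `k`, so that sums over a finite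
range of `k` may be written as sums over `ℤ`. -/
def qPochhammerInv (q : K) : ℤ → K
  | .ofNat n => (qPochhammer q q n)⁻¹
  | .negSucc _ => 0

/-- The general term `a^{k(k+1)/2} b^{k(k-1)/2}` of Ramanujan's theta series `f(a, b)`; both integer
divisions are exact. -/
def ramanujanThetaTerm (a b : K) (k : ℤ) : K := a ^ (k * (k + 1) / 2) * b ^ (k * (k - 1) / 2)

lemma qPochhammer_succ (a q : K) (n : ℕ) :
    qPochhammer a q (n + 1) = qPochhammer a q n * (1 - a * q ^ n) :=
  Finset.prod_range_succ _ n

lemma qPochhammer_self_ne_zero {q : K} (hq : ∀ n : ℕ, q ^ (n + 1) ≠ 1) (n : ℕ) :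
    qPochhammer q q n ≠ 0 :=
  Finset.prod_ne_zero_iff.mpr fun i _ => sub_ne_zero.mpr (pow_succ' q i ▸ (hq i).symm)

lemma qPochhammerInv_natCast (q : K) (n : ℕ) :
    qPochhammerInv q n = (qPochhammer q q n)⁻¹ := rfl

@[simp]
lemma qPochhammerInv_zero (q : K) : qPochhammerInv q 0 = 1 := inv_one

lemma qPochhammerInv_of_neg (q : K) {k : ℤ} (hk : k < 0) : qPochhammerInv q k = 0 := by
  obtain ⟨n, rfl⟩ := Int.eq_negSucc_of_lt_zero hk
  rfl

lemma qPochhammerInv_eq_mul_add_one {q : K} (hq : ∀ n : ℕ, q ^ (n + 1) ≠ 1) (k : ℤ) :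
    qPochhammerInv q k = (1 - q ^ (k + 1)) * qPochhammerInv q (k + 1) := by
  rcases lt_trichotomy k (-1) with hk | rfl | hk
  · rw [qPochhammerInv_of_neg q (by lia), qPochhammerInv_of_neg q (by lia), mul_zero]
  · simp [qPochhammerInv_of_neg]
  · lift k to ℕ using by lia
    have hpos := qPochhammer_self_ne_zero hq (k + 1)
    rw [← Nat.cast_add_one, zpow_natCast, qPochhammerInv_natCast, qPochhammerInv_natCast]
    rw [qPochhammer_succ, ← pow_succ'] at hpos ⊢
    obtain ⟨hk, hfactor⟩ := mul_ne_zero_iff.mp hpos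
    field_simp

-- Multiplied by `(q; q)_{i+j}`, this is two consecutive Pascal rules for Gaussian binomials.
lemma qPochhammerInv_pascal {q : K} (hq₀ : q ≠ 0) (hq : ∀ n : ℕ, q ^ (n + 1) ≠ 1) (i j : ℤ) :
    (1 - q ^ (i + j + 1)) * (1 - q ^ (i + j + 2)) *
        (qPochhammerInv q (i + 1) * qPochhammerInv q (j + 1)) =
      (1 + q ^ (i + j + 1)) * (qPochhammerInv q i * qPochhammerInv q j) +
        q ^ (j + 1) * (qPochhammerInv q (i - 1) * qPochhammerInv q (j + 1)) +
        q ^ (i + 1) * (qPochhammerInv q (i + 1) * qPochhammerInv q (j - 1)) := by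
  have hi := qPochhammerInv_eq_mul_add_one hq (i - 1)
  have hj := qPochhammerInv_eq_mul_add_one hq (j - 1)
  rw [sub_add_cancel] at hi hj
  rw [hi, hj, qPochhammerInv_eq_mul_add_one hq i, qPochhammerInv_eq_mul_add_one hq j,
    zpow_add₀ hq₀ (i + j) 2, zpow_add_one₀ hq₀ (i + j), zpow_add₀ hq₀ i j, zpow_add_one₀ hq₀ i,
    zpow_add_one₀ hq₀ j, zpow_ofNat]
  ring

lemma ramanujanThetaTerm_add_one {a b : K} (ha : a ≠ 0) (hb : b ≠ 0) (k : ℤ) :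
    ramanujanThetaTerm a b (k + 1) = a * (a * b) ^ k * ramanujanThetaTerm a b k := by
  have hexp_a : (k + 1) * (k + 1 + 1) / 2 = k * (k + 1) / 2 + (k + 1) := by
    rw [← Int.add_mul_ediv_right _ _ two_ne_zero]; ring_nf
  have hexp_b : (k + 1) * (k + 1 - 1) / 2 = k * (k - 1) / 2 + k := by
    rw [← Int.add_mul_ediv_right _ _ two_ne_zero]; ring_nf
  rw [ramanujanThetaTerm, ramanujanThetaTerm, hexp_a, hexp_b, zpow_add₀ ha, zpow_add₀ hb,
    zpow_add_one₀ ha, mul_zpow]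
  ring

lemma ramanujanThetaTerm_neg (a b : K) (k : ℤ) :
    ramanujanThetaTerm a b (-k) = ramanujanThetaTerm b a k := by
  have hexp_a : -k * (-k + 1) = k * (k - 1) := by ring
  have hexp_b : -k * (-k - 1) = k * (k + 1) := by ring
  rw [ramanujanThetaTerm, ramanujanThetaTerm, hexp_a, hexp_b, mul_comm]

lemma ramanujanThetaTerm_neg_pow {q : K} (hq₀ : q ≠ 0) {α β : ℕ} {k e : ℤ}
    (he : 2 * e = α * (k * (k + 1)) + β * (k * (k - 1))) :
    ramanujanThetaTerm (-q ^ α) (-q ^ β) k = (-1) ^ k * q ^ e := by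
  obtain ⟨c, hc⟩ : Even (k * (k - 1)) := Int.even_mul_pred_self k
  have hexp_a : k * (k + 1) / 2 = c + k := by lia
  have hexp_b : k * (k - 1) / 2 = c := by lia
  have hsign : (-1 : K) ^ (c + k) * (-1) ^ c = (-1) ^ k := by
    rw [← zpow_add₀ (by simp), show c + k + c = k + 2 * c by ring, zpow_add₀ (by simp),
      (even_two_mul c).neg_one_zpow, mul_one]
  have hpow : (q ^ α) ^ (c + k) * (q ^ β) ^ c = q ^ e := by
    rw [← zpow_natCast, ← zpow_natCast, ← zpow_mul, ← zpow_mul, ← zpow_add₀ hq₀]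
    congr 1
    refine mul_left_cancel₀ (two_ne_zero' ℤ) ?_
    linear_combination -he - (α + β) * hc
  rw [ramanujanThetaTerm, hexp_a, hexp_b, neg_eq_neg_one_mul (q ^ α), neg_eq_neg_one_mul (q ^ β),
    mul_zpow, mul_zpow, ← hsign, ← hpow]
  ring

/-- The general term of MacMahon's finite form of the Jacobi triple product, divided by
`(ab; ab)_{2n}`: it is the Gaussian binomial coefficient `[2n, n + k]` in base `ab` times the theta
term, and it vanishes for `n < |k|`. -/
def macMahonTerm (a b : K) (n : ℕ) (k : ℤ) : K :=
  qPochhammerInv (a * b) (n + k) * qPochhammerInv (a * b) (n - k) * ramanujanThetaTerm a b k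

-- The shifted theta terms are powers of `ab` times the unshifted one, which reduces the recurrence
-- to the Pascal rule with `i = n + k` and `j = n - k`.
lemma macMahonTerm_succ {a b : K} (ha : a ≠ 0) (hb : b ≠ 0)
    (hab : ∀ n : ℕ, (a * b) ^ (n + 1) ≠ 1) (n : ℕ) (k : ℤ) :
    (1 - (a * b) ^ (2 * n + 1)) * (1 - (a * b) ^ (2 * n + 2)) * macMahonTerm a b (n + 1) k =
      (1 + (a * b) ^ (2 * n + 1)) * macMahonTerm a b n k +
        a * (a * b) ^ n * macMahonTerm a b n (k - 1) +
        b * (a * b) ^ n * macMahonTerm a b n (k + 1) := by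
  have hab₀ : a * b ≠ 0 := mul_ne_zero ha hb
  have hprev : a * (a * b) ^ n * ramanujanThetaTerm a b (k - 1) =
      (a * b) ^ (n - k + 1) * ramanujanThetaTerm a b k := by
    have hstep := ramanujanThetaTerm_add_one ha hb (k - 1)
    have hpow : (a * b) ^ n = (a * b) ^ (n - k + 1) * (a * b) ^ (k - 1) := by
      rw [← zpow_add₀ hab₀, ← zpow_natCast]; congr 1; ring
    rw [sub_add_cancel] at hstep
    rw [hstep, hpow]
    ring
  have hnext : b * (a * b) ^ n * ramanujanThetaTerm a b (k + 1) =
      (a * b) ^ (n + k + 1) * ramanujanThetaTerm a b k := by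
    rw [ramanujanThetaTerm_add_one ha hb, zpow_add_one₀ hab₀, zpow_add₀ hab₀, zpow_natCast]
    ring
  have hpascal := qPochhammerInv_pascal hab₀ hab (n + k) (n - k)
  have hadd : (n : ℤ) + k + (n - k) = (2 * n : ℕ) := by push_cast; ring
  have hsub_pred : (n : ℤ) - (k - 1) = n - k + 1 := by ring
  have hsub_succ : (n : ℤ) - (k + 1) = n - k - 1 := by ring
  have hsucc_add : ((n + 1 : ℕ) : ℤ) + k = n + k + 1 := by push_cast; ring
  have hsucc_sub : ((n + 1 : ℕ) : ℤ) - k = n - k + 1 := by push_cast; ring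
  rw [hadd] at hpascal
  norm_cast at hpascal
  simp only [macMahonTerm, hsub_pred, hsub_succ, hsucc_add, hsucc_sub, ← add_assoc, ← add_sub_assoc]
  linear_combination ramanujanThetaTerm a b k * hpascal -
    qPochhammerInv (a * b) (n + k - 1) * qPochhammerInv (a * b) (n - k + 1) * hprev -
    qPochhammerInv (a * b) (n + k + 1) * qPochhammerInv (a * b) (n - k - 1) * hnext

/-- The sum over `k` of the terms `macMahonTerm a b n k`: the product side of MacMahon's identity,
with the same normalization by `(ab; ab)_{2n}`. -/
def macMahonProd (a b : K) (n : ℕ) : K :=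
  qPochhammer (-a) (a * b) n * qPochhammer (-b) (a * b) n / qPochhammer (a * b) (a * b) (2 * n)

lemma macMahonProd_succ {a b : K} (hab : ∀ n : ℕ, (a * b) ^ (n + 1) ≠ 1) (n : ℕ) :
    (1 - (a * b) ^ (2 * n + 1)) * (1 - (a * b) ^ (2 * n + 2)) * macMahonProd a b (n + 1) =
      (1 + (a * b) ^ (2 * n + 1)) * macMahonProd a b n +
        a * (a * b) ^ n * macMahonProd a b n +
        b * (a * b) ^ n * macMahonProd a b n := by
  have hself := qPochhammer_self_ne_zero hab (2 * n)
  have hne_one : 1 - (a * b) ^ (2 * n + 1) ≠ 0 := sub_ne_zero.mpr (hab _).symm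
  have hne_two : 1 - (a * b) ^ (2 * n + 2) ≠ 0 := sub_ne_zero.mpr (hab _).symm
  rw [macMahonProd, macMahonProd, mul_add_one 2 n]
  simp only [qPochhammer_succ, ← pow_succ', add_assoc, one_add_one_eq_two]
  field_simp
  ring

lemma hasSum_macMahonTerm [TopologicalSpace K] [IsTopologicalRing K] {a b : K} (ha : a ≠ 0)
    (hb : b ≠ 0) (hab : ∀ n : ℕ, (a * b) ^ (n + 1) ≠ 1) (n : ℕ) :
    HasSum (macMahonTerm a b n) (macMahonProd a b n) := by
  induction n with
  | zero =>
    have hzero (k : ℤ) (hk : k ≠ 0) : macMahonTerm a b 0 k = 0 := by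
      rcases lt_or_gt_of_ne hk with hk | hk
      · simp [macMahonTerm, qPochhammerInv_of_neg _ hk]
      · simp [macMahonTerm, qPochhammerInv_of_neg _ (neg_neg_of_pos hk)]
    convert hasSum_single 0 hzero using 1
    simp [macMahonProd, macMahonTerm, ramanujanThetaTerm, qPochhammer]
  | succ n ih =>
    have hprev := ((Equiv.subRight (1 : ℤ)).hasSum_iff.mpr ih).mul_left (a * (a * b) ^ n)
    have hnext := ((Equiv.addRight (1 : ℤ)).hasSum_iff.mpr ih).mul_left (b * (a * b) ^ n)
    have hne (m : ℕ) : 1 - (a * b) ^ (m + 1) ≠ 0 := sub_ne_zero.mpr (hab m).symm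
    have hcoeff : (1 - (a * b) ^ (2 * n + 1)) * (1 - (a * b) ^ (2 * n + 2)) ≠ 0 :=
      mul_ne_zero (hne _) (hne _)
    rw [← hasSum_mul_left_iff hcoeff, macMahonProd_succ hab]
    simp only [macMahonTerm_succ ha hb hab]
    exact ((ih.mul_left _).add hprev).add hnext

end Field

section NormedField

variable {K : Type*} [NormedField K]

/-- The infinite `q`-Pochhammer symbol `(a; q)_∞ = ∏_{n≥0} (1 - a q^n)`. -/
noncomputable def qPochhammerInf (a q : K) : K := ∏' n : ℕ, (1 - a * q ^ n)

lemma pow_succ_ne_one_of_norm_lt_one {q : K} (hq : ‖q‖ < 1) (n : ℕ) : q ^ (n + 1) ≠ 1 :=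
  fun h => (pow_lt_one₀ (norm_nonneg q) hq n.succ_ne_zero).ne (by rw [← norm_pow, h, norm_one])

lemma summable_norm_neg_mul_pow {q : K} (hq : ‖q‖ < 1) (a : K) :
    Summable fun n : ℕ => ‖-(a * q ^ n)‖ := by
  simpa using (summable_geometric_of_lt_one (norm_nonneg q) hq).mul_left ‖a‖

lemma summable_norm_ramanujanThetaTerm_natCast {a b : K} (ha : a ≠ 0) (hb : b ≠ 0)
    (hab : ‖a * b‖ < 1) : Summable fun n : ℕ => ‖ramanujanThetaTerm a b n‖ := by
  have hratio : Tendsto (fun n : ℕ => ‖a * (a * b) ^ n‖) atTop (𝓝 0) := by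
    simpa using ((tendsto_pow_atTop_nhds_zero_of_norm_lt_one hab).const_mul a).norm
  refine summable_of_ratio_norm_eventually_le one_half_lt_one ?_
  filter_upwards [hratio.eventually_le_const one_half_pos] with n hn
  rw [norm_norm, norm_norm, Nat.cast_add_one, ramanujanThetaTerm_add_one ha hb, norm_mul,
    zpow_natCast]
  gcongr

lemma summable_norm_ramanujanThetaTerm {a b : K} (ha : a ≠ 0) (hb : b ≠ 0)
    (hab : ‖a * b‖ < 1) : Summable fun k : ℤ => ‖ramanujanThetaTerm a b k‖ := by
  refine .of_nat_of_neg (summable_norm_ramanujanThetaTerm_natCast ha hb hab) ?_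
  simpa only [ramanujanThetaTerm_neg] using
    summable_norm_ramanujanThetaTerm_natCast hb ha (mul_comm a b ▸ hab)

variable [CompleteSpace K]

lemma multipliable_one_sub_mul_pow {q : K} (hq : ‖q‖ < 1) (a : K) :
    Multipliable fun n : ℕ => 1 - a * q ^ n := by
  simpa only [sub_eq_add_neg] using
    multipliable_one_add_of_summable (summable_norm_neg_mul_pow hq a)

lemma tendsto_qPochhammer {q : K} (hq : ‖q‖ < 1) (a : K) :
    Tendsto (qPochhammer a q) atTop (𝓝 (qPochhammerInf a q)) :=
  (multipliable_one_sub_mul_pow hq a).tendsto_prod_tprod_nat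

lemma qPochhammerInf_self_ne_zero {q : K} (hq : ‖q‖ < 1) : qPochhammerInf q q ≠ 0 := by
  have hfactor (n : ℕ) : 1 + -(q * q ^ n) ≠ 0 := by
    rw [← sub_eq_add_neg, ← pow_succ']
    exact sub_ne_zero.mpr (pow_succ_ne_one_of_norm_lt_one hq n).symm
  simpa only [qPochhammerInf, sub_eq_add_neg] using
    tprod_one_add_ne_zero_of_summable hfactor (summable_norm_neg_mul_pow hq q)

lemma tendsto_qPochhammerInv {q : K} (hq : ‖q‖ < 1) :
    Tendsto (qPochhammerInv q) atTop (𝓝 (qPochhammerInf q q)⁻¹) := by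
  rw [← Nat.map_cast_int_atTop, tendsto_map'_iff]
  exact (tendsto_qPochhammer hq q).inv₀ (qPochhammerInf_self_ne_zero hq)

lemma exists_norm_qPochhammerInv_le {q : K} (hq : ‖q‖ < 1) :
    ∃ C : ℝ, ∀ k : ℤ, ‖qPochhammerInv q k‖ ≤ C := by
  have hlim := (tendsto_qPochhammerInv hq).comp tendsto_natCast_atTop_atTop
  obtain ⟨C, hC⟩ := (Metric.isBounded_range_of_tendsto _ hlim).exists_norm_le
  have hnat (n : ℕ) : ‖qPochhammerInv q n‖ ≤ C := hC _ ⟨n, rfl⟩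
  refine ⟨C, fun k => ?_⟩
  rcases lt_or_ge k 0 with hk | hk
  · rw [qPochhammerInv_of_neg q hk, norm_zero]
    exact (norm_nonneg _).trans (hnat 0)
  · lift k to ℕ using hk
    exact hnat k

lemma tendsto_macMahonTerm {a b : K} (hab : ‖a * b‖ < 1) (k : ℤ) :
    Tendsto (fun n => macMahonTerm a b n k) atTop
      (𝓝 ((qPochhammerInf (a * b) (a * b))⁻¹ ^ 2 * ramanujanThetaTerm a b k)) := by
  have hadd : Tendsto (fun n : ℕ => (n : ℤ) + k) atTop atTop :=
    tendsto_atTop_add_const_right _ k tendsto_natCast_atTop_atTop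
  have hsub : Tendsto (fun n : ℕ => (n : ℤ) - k) atTop atTop :=
    tendsto_atTop_add_const_right _ (-k) tendsto_natCast_atTop_atTop
  have hinv := tendsto_qPochhammerInv hab
  rw [sq]
  exact ((hinv.comp hadd).mul (hinv.comp hsub)).mul_const _

theorem hasSum_ramanujanThetaTerm {a b : K} (ha : a ≠ 0) (hb : b ≠ 0) (hab : ‖a * b‖ < 1) :
    HasSum (ramanujanThetaTerm a b)
      (qPochhammerInf (a * b) (a * b) * qPochhammerInf (-a) (a * b) *
        qPochhammerInf (-b) (a * b)) := by
  have hsummable := summable_norm_ramanujanThetaTerm ha hb hab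
  have hne := qPochhammerInf_self_ne_zero hab
  obtain ⟨C, hC⟩ := exists_norm_qPochhammerInv_le hab
  have hC₀ : 0 ≤ C := (norm_nonneg _).trans (hC 0)
  have hbound (n : ℕ) (k : ℤ) : ‖macMahonTerm a b n k‖ ≤ C * C * ‖ramanujanThetaTerm a b k‖ := by
    rw [macMahonTerm, norm_mul, norm_mul]
    gcongr <;> exact hC _
  have hsums := tendsto_tsum_of_dominated_convergence (hsummable.mul_left (C * C))
    (tendsto_macMahonTerm hab) (.of_forall hbound)
  have hproducts := ((tendsto_qPochhammer hab (-a)).mul (tendsto_qPochhammer hab (-b))).div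
    ((tendsto_qPochhammer hab (a * b)).comp (tendsto_id.const_mul_atTop' two_pos)) hne
  have hlimits := tendsto_nhds_unique hsums <| hproducts.congr fun n =>
    (hasSum_macMahonTerm ha hb (pow_succ_ne_one_of_norm_lt_one hab) n).tsum_eq.symm
  rw [tsum_mul_left] at hlimits
  field_simp at hlimits
  rw [← hlimits]
  exact hsummable.of_norm.hasSum

lemma hasSum_ramanujanThetaTerm_neg_pow {q : K} (hq₀ : q ≠ 0) (hq : ‖q‖ < 1) {α β N : ℕ}
    (hN : α + β = N) (hN₀ : N ≠ 0) :
    HasSum (ramanujanThetaTerm (-q ^ α) (-q ^ β))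
      (∏' n : ℕ, (1 - q ^ (N * n + N)) * (1 - q ^ (N * n + α)) * (1 - q ^ (N * n + β))) := by
  have hbase : -q ^ α * -q ^ β = q ^ N := by rw [neg_mul_neg, ← pow_add, hN]
  have hnorm : ‖q ^ N‖ < 1 := by
    rw [norm_pow]
    exact pow_lt_one₀ (norm_nonneg q) hq hN₀
  have hmult := multipliable_one_sub_mul_pow hnorm
  have hneg (m : ℕ) : -q ^ m ≠ 0 := neg_ne_zero.mpr (pow_ne_zero m hq₀)
  have hfactor (m n : ℕ) : 1 - q ^ m * (q ^ N) ^ n = 1 - q ^ (N * n + m) := by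
    rw [← pow_mul, ← pow_add, add_comm]
  convert hasSum_ramanujanThetaTerm (hneg α) (hneg β) (hbase ▸ hnorm) using 1
  simp only [hbase, neg_neg, qPochhammerInf]
  rw [← (hmult _).tprod_mul (hmult _), ← ((hmult _).mul (hmult _)).tprod_mul (hmult _)]
  simp only [hfactor]

end NormedField

lemma injective_two_mul_add (r : ℤ) : Function.Injective fun k : ℤ => 2 * k + r :=
  (add_left_injective r).comp (mul_right_injective₀ two_ne_zero)

lemma tsum_even_add_tsum_odd {M : Type*} [AddCommGroup M] [UniformSpace M] [IsUniformAddGroup M]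
    [CompleteSpace M] [T2Space M] {f : ℤ → M} (hf : Summable f) {r : ℤ} (hr : Odd r) :
    ∑' k, f (2 * k) + ∑' k, f (2 * k + r) = ∑' k, f k := by
  have hinj_even : Function.Injective fun k : ℤ => 2 * k := mul_right_injective₀ two_ne_zero
  have hinj_odd := injective_two_mul_add r
  have hrange_even : Set.range (fun k : ℤ => 2 * k) = {k | Even k} := by
    ext k; simp [even_iff_exists_two_mul]
  have hrange_odd : Set.range (fun k : ℤ => 2 * k + r) = {k | Odd k} := by
    obtain ⟨s, rfl⟩ := hr
    ext k
    exact ⟨fun ⟨m, hm⟩ => ⟨m + s, by lia⟩, fun ⟨m, hm⟩ => ⟨m - s, by lia⟩⟩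
  have heven := hinj_even.hasSum_range_iff.mpr (hf.comp_injective hinj_even).hasSum
  have hodd := hinj_odd.hasSum_range_iff.mpr (hf.comp_injective hinj_odd).hasSum
  rw [hrange_even] at heven
  rw [hrange_odd] at hodd
  exact (heven.add_isCompl Int.isCompl_even_odd hodd).tsum_eq.symm

section Dissection

variable {K : Type*} [Field K] {q : K}

lemma virasoro_even_term_eq_theta (hq₀ : q ≠ 0) (k : ℤ) :
    q ^ (30 * k ^ 2) * (q ^ k - q ^ (11 * k + 1)) =
      ramanujanThetaTerm (-q ^ 8) (-q ^ 7) (2 * k) -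
        q * ramanujanThetaTerm (-q ^ 13) (-q ^ 2) (2 * k) := by
  rw [ramanujanThetaTerm_neg_pow hq₀ (e := 30 * k ^ 2 + k) (by push_cast; ring),
    ramanujanThetaTerm_neg_pow hq₀ (e := 30 * k ^ 2 + 11 * k) (by push_cast; ring),
    (even_two_mul k).neg_one_zpow]
  simp only [zpow_add₀ hq₀, zpow_one]
  ring

lemma virasoro_odd_term_eq_theta (hq₀ : q ≠ 0) (k : ℤ) :
    q ^ (30 * k ^ 2) * (q ^ (-19 * k + 3) - q ^ (31 * k + 8)) =
      ramanujanThetaTerm (-q ^ 8) (-q ^ 7) (2 * k + 1) -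
        q * ramanujanThetaTerm (-q ^ 13) (-q ^ 2) (2 * k + -1) := by
  have hodd : Odd (2 * k + -1) := (even_two_mul k).add_odd odd_neg_one
  rw [ramanujanThetaTerm_neg_pow hq₀ (e := 30 * k ^ 2 + (31 * k + 8)) (by push_cast; ring),
    ramanujanThetaTerm_neg_pow hq₀ (e := 30 * k ^ 2 + (-19 * k + 2)) (by push_cast; ring),
    (odd_two_mul_add_one k).neg_one_zpow, hodd.neg_one_zpow]
  simp only [zpow_add₀ hq₀, zpow_ofNat]
  ring

end Dissection

theorem virasoro_char_sum_eq_G_general {K : Type*} [NormedField K] [CompleteSpace K] (q : K)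
    (hq : ‖q‖ < 1) :
    (∑' k : ℤ, q ^ (30 * k ^ 2) * (q ^ k - q ^ (11 * k + 1))) +
        ∑' k : ℤ, q ^ (30 * k ^ 2) * (q ^ (-19 * k + 3) - q ^ (31 * k + 8)) =
      (∏' n : ℕ, (1 - q ^ (15 * n + 15)) * (1 - q ^ (15 * n + 8)) * (1 - q ^ (15 * n + 7))) -
        q * ∏' n : ℕ,
          (1 - q ^ (15 * n + 15)) * (1 - q ^ (15 * n + 2)) * (1 - q ^ (15 * n + 13)) := by
  rcases eq_or_ne q 0 with rfl | hq₀
  · have hzero (k : ℤ) (hk : k ≠ 0) (x : K) : 0 ^ (30 * k ^ 2) * x = 0 := by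
      rw [zero_zpow _ (by positivity), zero_mul]
    rw [tsum_eq_single 0 fun k hk => hzero k hk _, tsum_eq_single 0 fun k hk => hzero k hk _]
    simp
  have hu := hasSum_ramanujanThetaTerm_neg_pow hq₀ hq (α := 8) (β := 7) (N := 15) rfl (by simp)
  have hv := hasSum_ramanujanThetaTerm_neg_pow hq₀ hq (α := 13) (β := 2) (N := 15) rfl (by simp)
  have hu_split := tsum_even_add_tsum_odd hu.summable odd_one
  have hv_split := tsum_even_add_tsum_odd hv.summable odd_neg_one
  rw [hu.tsum_eq] at hu_split
  rw [hv.tsum_eq, tprod_congr fun n => mul_right_comm _ _ _] at hv_split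
  have hsummable_even {f : ℤ → K} (hf : Summable f) : Summable fun k => f (2 * k) :=
    hf.comp_injective (mul_right_injective₀ two_ne_zero)
  have hsummable_odd {f : ℤ → K} (hf : Summable f) (r : ℤ) : Summable fun k => f (2 * k + r) :=
    hf.comp_injective (injective_two_mul_add r)
  rw [tsum_congr (virasoro_even_term_eq_theta hq₀), tsum_congr (virasoro_odd_term_eq_theta hq₀),
    (hsummable_even hu.summable).tsum_sub ((hsummable_even hv.summable).mul_left q),
    (hsummable_odd hu.summable 1).tsum_sub ((hsummable_odd hv.summable (-1)).mul_left q),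
    tsum_mul_left, tsum_mul_left]
  linear_combination hu_split - q * hv_split

theorem virasoro_char_sum_eq_G (q : ℂ) (hq : ‖q‖ < 1) :
    (∑' k : ℤ, q ^ (30 * k ^ 2) * (q ^ k - q ^ (11 * k + 1)))
      + ∑' k : ℤ, q ^ (30 * k ^ 2) * (q ^ (-19 * k + 3) - q ^ (31 * k + 8)) =
      Gf q :=
  virasoro_char_sum_eq_G_general q hq
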